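/- Let f : B → A be a homomorphism of commutative rings. The following are equivalent: (1) for every comodule (M, ρ) over the canonical coring, the counit map ζ_M : M^co ⊗_B A → M, ζ_M(m ⊗ a) = m·a, is bijective; (2) for every comodule (M, ρ) over the canonical coring, the map M^co ⊗_B A → M ⊗_B A induced by the inclusion M^co ⊆ M is injective and its image equals the equalizer of ρ ⊗ id_A and i_M ⊗ id_A : M ⊗_B A → M ⊗_B A ⊗_B A, where i_M(m) = m ⊗ 1 (i.e., the functor − ⊗_B A preserves the equalizer of ρ and i_M). -/

import Mathlib

open TensorProduct

universe u

noncomputable def unitMap (B A : Type u) [CommRing B] [CommRing A] [Algebra B A]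
    (N : Type u) [AddCommGroup N] [Module B N] : N →ₗ[B] N ⊗[B] A :=
  (TensorProduct.mk B N A).flip 1

/-- The action map `M ⊗_B A → M`, `m ⊗ a ↦ m · a`. -/
noncomputable def actionMap (B A : Type u) [CommRing B] [CommRing A] [Algebra B A]
    (M : Type u) [AddCommGroup M] [Module B M] [Module A M] [IsScalarTower B A M] :
    M ⊗[B] A →ₗ[B] M :=
  TensorProduct.lift (LinearMap.mk₂ B (fun m a => a • m)
    (fun m m' a => smul_add a m m')
    (fun b m a => smul_comm a b m)
    (fun m a a' => add_smul a a' m)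
    (fun b m a => smul_assoc b a m))

/-- `(M, ρ)` is a comodule over the canonical coring `A ⊗_B A`. -/
def IsCanComodule (B A : Type u) [CommRing B] [CommRing A] [Algebra B A]
    (M : Type u) [AddCommGroup M] [Module B M] [Module A M] [IsScalarTower B A M]
    (ρ : M →ₗ[B] M ⊗[B] A) : Prop :=
  (∀ (a : A) (m : M),
      ρ (a • m) = LinearMap.lTensor M (LinearMap.mulLeft B a) (ρ m)) ∧
  (∀ m : M, LinearMap.rTensor A ρ (ρ m) = LinearMap.rTensor A (unitMap B A M) (ρ m)) ∧
  (∀ m : M, actionMap B A M (ρ m) = m)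

/-- The coinvariants `M^co = {m : ρ m = m ⊗ 1}` as a `B`-submodule. -/
noncomputable def coinv (B A : Type u) [CommRing B] [CommRing A] [Algebra B A]
    (M : Type u) [AddCommGroup M] [Module B M] [Module A M] [IsScalarTower B A M]
    (ρ : M →ₗ[B] M ⊗[B] A) : Submodule B M where
  carrier := {m | ρ m = m ⊗ₜ[B] 1}
  add_mem' := by
    intro x y hx hy
    simp only [Set.mem_setOf_eq] at *
    rw [map_add, hx, hy, add_tmul]
  zero_mem' := by simp
  smul_mem' := by
    intro b m hm
    simp only [Set.mem_setOf_eq] at *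
    rw [map_smul, hm, smul_tmul']

/-- The counit map `ζ_M : M^co ⊗_B A → M`, `m ⊗ a ↦ m · a`. -/
noncomputable def counitMap (B A : Type u) [CommRing B] [CommRing A] [Algebra B A]
    (M : Type u) [AddCommGroup M] [Module B M] [Module A M] [IsScalarTower B A M]
    (ρ : M →ₗ[B] M ⊗[B] A) : (coinv B A M ρ) ⊗[B] A →ₗ[B] M :=
  actionMap B A M ∘ₗ LinearMap.rTensor A (coinv B A M ρ).subtype

/-- Splitting: elements of the equalizer are recovered by `ρ ∘ action`. -/
theorem rho_action_of_mem (B A : Type u) [CommRing B] [CommRing A] [Algebra B A]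
    (M : Type u) [AddCommGroup M] [Module B M] [Module A M] [IsScalarTower B A M]
    (ρ : M →ₗ[B] M ⊗[B] A) (h : IsCanComodule B A M ρ) (x : M ⊗[B] A)
    (hx : LinearMap.rTensor A ρ x = LinearMap.rTensor A (unitMap B A M) x) :
    ρ (actionMap B A M x) = x := by
  let t : (M ⊗[B] A) ⊗[B] A →ₗ[B] M ⊗[B] A :=
    LinearMap.lTensor M (LinearMap.mul' B A) ∘ₗ (TensorProduct.assoc B M A A).toLinearMap
  have h1 : t ∘ₗ LinearMap.rTensor A ρ = ρ ∘ₗ actionMap B A M := by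
    ext m a
    have h2 : ∀ y : M ⊗[B] A, t (y ⊗ₜ[B] a) = LinearMap.lTensor M (LinearMap.mulLeft B a) y := by
      intro y
      induction y with
      | zero => simp
      | add y z hy hz => rw [add_tmul, map_add, map_add, hy, hz]
      | tmul m' a' => simp [t, mul_comm]
    have h3 := h.1 a m
    simp [actionMap, h2, h3]
  have h4 : t ∘ₗ LinearMap.rTensor A (unitMap B A M) = LinearMap.id := by
    ext m a
    simp [t, unitMap]
  have e1 := LinearMap.congr_fun h1 x
  have e2 := LinearMap.congr_fun h4 x
  simp only [LinearMap.comp_apply, LinearMap.id_apply] at e1 e2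
  rw [← e1, hx, e2]

theorem rTensor_coinv_mem (B A : Type u) [CommRing B] [CommRing A] [Algebra B A]
    (M : Type u) [AddCommGroup M] [Module B M] [Module A M] [IsScalarTower B A M]
    (ρ : M →ₗ[B] M ⊗[B] A) (y : (coinv B A M ρ) ⊗[B] A) :
    LinearMap.rTensor A ρ (LinearMap.rTensor A (coinv B A M ρ).subtype y) =
      LinearMap.rTensor A (unitMap B A M) (LinearMap.rTensor A (coinv B A M ρ).subtype y) := by
  have h : ρ ∘ₗ (coinv B A M ρ).subtype = unitMap B A M ∘ₗ (coinv B A M ρ).subtype := by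
    ext m
    exact m.2
  rw [← LinearMap.comp_apply, ← LinearMap.rTensor_comp, h, LinearMap.rTensor_comp,
    LinearMap.comp_apply]

theorem rho_counit (B A : Type u) [CommRing B] [CommRing A] [Algebra B A]
    (M : Type u) [AddCommGroup M] [Module B M] [Module A M] [IsScalarTower B A M]
    (ρ : M →ₗ[B] M ⊗[B] A) (h : IsCanComodule B A M ρ) (y : (coinv B A M ρ) ⊗[B] A) :
    ρ (counitMap B A M ρ y) = LinearMap.rTensor A (coinv B A M ρ).subtype y :=
  rho_action_of_mem B A M ρ h _ (rTensor_coinv_mem B A M ρ y)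

/-- The right adjoint of the comparison functor is fully faithful (i.e. every counit map
`ζ_M : M^co ⊗_B A → M` is bijective) if and only if `- ⊗_B A` preserves the equalizer of
`ρ` and `i_M` for every comodule `(M, ρ)` over the canonical coring. -/
theorem counit_bijective_iff_preserves_equalizer
    (B A : Type u) [CommRing B] [CommRing A] [Algebra B A] :
    (∀ (M : Type u) [AddCommGroup M] [Module B M] [Module A M] [IsScalarTower B A M]
       (ρ : M →ₗ[B] M ⊗[B] A), IsCanComodule B A M ρ →
       Function.Bijective (counitMap B A M ρ)) ↔
    (∀ (M : Type u) [AddCommGroup M] [Module B M] [Module A M] [IsScalarTower B A M]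
       (ρ : M →ₗ[B] M ⊗[B] A), IsCanComodule B A M ρ →
       (Function.Injective (LinearMap.rTensor A (coinv B A M ρ).subtype) ∧
        Set.range (LinearMap.rTensor A (coinv B A M ρ).subtype) =
          {x : M ⊗[B] A |
            LinearMap.rTensor A ρ x = LinearMap.rTensor A (unitMap B A M) x})) := by
  constructor
  · intro H M _ _ _ _ ρ h
    obtain ⟨hi, hs⟩ := H M ρ h
    refine ⟨?_, ?_⟩
    · intro y z hyz
      apply hi
      simp only [counitMap, LinearMap.comp_apply]
      rw [hyz]
    · ext x
      constructor
      · rintro ⟨y, rfl⟩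
        exact rTensor_coinv_mem B A M ρ y
      · intro hx
        obtain ⟨y, hy⟩ := hs (actionMap B A M x)
        refine ⟨y, ?_⟩
        rw [← rho_counit B A M ρ h y, hy]
        exact rho_action_of_mem B A M ρ h x hx
  · intro H M _ _ _ _ ρ h
    obtain ⟨hi, hr⟩ := H M ρ h
    refine ⟨?_, ?_⟩
    · intro y z hyz
      apply hi
      rw [← rho_counit B A M ρ h y, hyz, rho_counit B A M ρ h z]
    · intro m
      have hm : ρ m ∈ Set.range (LinearMap.rTensor A (coinv B A M ρ).subtype) := by
        rw [hr]
        exact h.2.1 m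
      obtain ⟨y, hy⟩ := hm
      refine ⟨y, ?_⟩
      simp only [counitMap, LinearMap.comp_apply]
      rw [hy]
      exact h.2.2 m
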